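/- Let n ≥ 2, let a_1, …, a_l be nonzero points of ℝ^n, let O denote the origin, and let F_1, …, F_l ∈ ℝ^n. Suppose the finite system of forces F = Σ_{i=1}^{l} F_i μ_{[O, a_i]} on the segments [O, a_i] emanating from the origin is in equilibrium, i.e. Σ_{i=1}^{l} H^1([O, a_i]) F_i = 0 and Σ_{i=1}^{l} H^1([O, a_i]) (ĥ([O, a_i]) ∧ F_i) = 0. Then there exist finitely many 2-simplices τ_1, …, τ_m in ℝ^n and symmetric real n×n matrices A_1, …, A_m, with each A_j structural for τ_j, such that F = Σ_{j=1}^{m} A_j ⊗ Beam(τ_j) as ℝ^n-valued vector measures. -/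

import Mathlib

open MeasureTheory Matrix
open scoped RealInnerProductSpace

noncomputable section

abbrev Euc (n : ℕ) : Type := EuclideanSpace ℝ (Fin n)

/-- The action of an `n × n` real matrix on a vector of `ℝⁿ`. -/
def matVec {n : ℕ} (A : Matrix (Fin n) (Fin n) ℝ) (v : Euc n) : Euc n :=
  Matrix.toEuclideanLin A v

/-- `wedge v w = v wᵀ − w vᵀ`. -/
def wedge {n : ℕ} (v w : Euc n) : Matrix (Fin n) (Fin n) ℝ :=
  Matrix.of fun p q => v p * w q - w p * v q

/-- `rankOne v = v vᵀ`. -/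
def rankOne {n : ℕ} (v : Euc n) : Matrix (Fin n) (Fin n) ℝ :=
  Matrix.of fun p q => v p * v q

/-- The (closed) simplex spanned by a family of points: the convex hull of its range. -/
def simplexSet {n : ℕ} {ι : Type*} (b : ι → Euc n) : Set (Euc n) :=
  convexHull ℝ (Set.range b)

/-- The barycenter of a finite family of points. -/
def bary {n : ℕ} {ι : Type*} [Fintype ι] (b : ι → Euc n) : Euc n :=
  (Fintype.card ι : ℝ)⁻¹ • ∑ i, b i

/-- The vertices of the face of the simplex `b` opposite to the vertex `i`. -/
def face {n K : ℕ} (b : Fin K → Euc n) (i : Fin K) : {j : Fin K // j ≠ i} → Euc n :=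
  fun j => b j.1

/-- The vector measure `Σᵢ Fᵢ μ_{sᵢ}` of a finite system of forces, as an
`ℝⁿ`-valued set function; here `d` is the Hausdorff dimension of the simplices. -/
def sys {n l : ℕ} {ι : Type*} (d : ℝ) (s : Fin l → ι → Euc n) (F : Fin l → Euc n) :
    Set (Euc n) → Euc n :=
  fun S => ∑ i, (μH[d] (S ∩ simplexSet (s i))).toReal • F i

/-- A finite system of forces is in equilibrium: zero net force and zero net torque. -/
def equil {n l : ℕ} {ι : Type*} [Fintype ι] (d : ℝ) (s : Fin l → ι → Euc n)
    (F : Fin l → Euc n) : Prop :=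
  (∑ i, (μH[d] (simplexSet (s i))).toReal • F i = 0) ∧
  (∑ i, (μH[d] (simplexSet (s i))).toReal • wedge (bary (s i)) (F i) = 0)

/-- `v` is the outward unit conormal of the face of `b` opposite vertex `i`. -/
def IsConormal {n K : ℕ} (b : Fin K → Euc n) (i : Fin K) (v : Euc n) : Prop :=
  v ∈ vectorSpan ℝ (Set.range b) ∧ ‖v‖ = 1 ∧
    (∀ w ∈ vectorSpan ℝ (Set.range (face b i)), ⟪v, w⟫ = 0) ∧
    ⟪v, b i - bary (face b i)⟫ < 0

open scoped Classical in
/-- The outward unit conormal of the face of `b` opposite vertex `i`. -/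
def conormal {n K : ℕ} (b : Fin K → Euc n) (i : Fin K) : Euc n :=
  if h : ∃ v, IsConormal b i v then h.choose else 0

/-- A matrix is structural for a simplex if its range is contained in the
direction space of the simplex. -/
def Structural {n : ℕ} {ι : Type*} (A : Matrix (Fin n) (Fin n) ℝ) (b : ι → Euc n) : Prop :=
  ∀ v, matVec A v ∈ vectorSpan ℝ (Set.range b)

/-- The beam `A ⊗ Beam(τ)` of a simplex `τ` with `K` vertices (so of dimension `K − 1`,
with faces of dimension `K − 2`), as an `ℝⁿ`-valued set function. -/
def beam {n K : ℕ} (A : Matrix (Fin n) (Fin n) ℝ) (b : Fin K → Euc n) :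
    Set (Euc n) → Euc n :=
  fun S => ∑ i, (μH[(K : ℝ) - 2] (S ∩ simplexSet (face b i))).toReal • matVec A (conormal b i)

/-- `G` is a finite sum of beams over simplices with `K` vertices, with symmetric
coefficient matrices that are structural for their simplices. -/
def IsBeamSum {n : ℕ} (K : ℕ) (G : Set (Euc n) → Euc n) : Prop :=
  ∃ (m : ℕ) (τ : Fin m → Fin K → Euc n) (A : Fin m → Matrix (Fin n) (Fin n) ℝ),
    (∀ j, AffineIndependent ℝ (τ j)) ∧ (∀ j, (A j).IsSymm) ∧
    (∀ j, Structural (A j) (τ j)) ∧ (G = fun S => ∑ j, beam (A j) (τ j) S)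


def beamSub (n : ℕ) : Submodule ℝ (Set (Euc n) → Euc n) where
  carrier := {G | IsBeamSum 3 G}
  zero_mem' := ⟨0, Fin.elim0, Fin.elim0, fun j => j.elim0, fun j => j.elim0, fun j => j.elim0, by
    funext S; simp⟩
  add_mem' := by
    rintro G H ⟨m, τ, A, h1, h2, h3, rfl⟩ ⟨m', τ', A', h1', h2', h3', rfl⟩
    refine ⟨m + m', Fin.append τ τ', Fin.append A A', ?_, ?_, ?_, ?_⟩
    · intro j; induction j using Fin.addCases <;> simp [*]
    · intro j; induction j using Fin.addCases <;> simp [*]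
    · intro j; induction j using Fin.addCases <;> simp [*]
    · funext S; simp [Fin.sum_univ_add]
  smul_mem' := by
    rintro c G ⟨m, τ, A, h1, h2, h3, rfl⟩
    refine ⟨m, τ, fun j => c • A j, h1, fun j => (h2 j).smul c, ?_, ?_⟩
    · intro j v
      have : matVec (c • A j) v = c • matVec (A j) v := by simp [matVec]
      rw [this]
      exact Submodule.smul_mem _ _ (h3 j v)
    · funext S
      have : ∀ j v, matVec (c • A j) v = c • matVec (A j) v := by intro j v; simp [matVec]
      simp only [Pi.smul_apply, Finset.smul_sum, beam, this]
      refine Finset.sum_congr rfl fun j _ => Finset.sum_congr rfl fun i _ => ?_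
      rw [smul_comm]

theorem matVec_rankOne {n : ℕ} (c : ℝ) (d v : Euc n) :
    matVec (c • rankOne d) v = (c * ⟪d, v⟫) • d := by
  ext k
  simp [matVec, rankOne, Matrix.toLpLin_apply, Matrix.mulVec, dotProduct, PiLp.inner_apply, Finset.mul_sum, Finset.sum_mul]
  refine Finset.sum_congr rfl fun j _ => ?_
  ring

theorem span_simp {n : ℕ} (y z : Euc n) :
    vectorSpan ℝ (Set.range ![0, y, z]) = Submodule.span ℝ {y, z} := by
  have h0 : (0 : Euc n) ∈ Set.range ![0, y, z] := ⟨0, rfl⟩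
  rw [vectorSpan_eq_span_vsub_set_right ℝ h0]
  have h1 : ({z, y, 0} : Set (Euc n)) = insert 0 {y, z} := by
    ext x; simp; tauto
  simp
  rw [h1, Submodule.span_insert_zero]

theorem gram_pos {n : ℕ} {y z : Euc n} (h : LinearIndependent ℝ ![y, z]) :
    0 < ‖y‖ ^ 2 * ‖z‖ ^ 2 - ⟪y, z⟫ ^ 2 := by
  have hz : z ≠ 0 := by simpa using h.ne_zero 1
  have hzz : 0 < ‖z‖ := norm_pos_iff.2 hz
  have hy : ‖z‖ ^ 2 • y - ⟪y, z⟫ • z ≠ 0 := by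
    intro h0
    have := LinearIndependent.pair_iff.1 h (‖z‖ ^ 2) (-⟪y, z⟫) (by rw [neg_smul, ← sub_eq_add_neg]; exact h0)
    exact (pow_pos hzz 2).ne' this.1
  have h2 : 0 < ⟪‖z‖ ^ 2 • y - ⟪y, z⟫ • z, ‖z‖ ^ 2 • y - ⟪y, z⟫ • z⟫ := real_inner_self_pos.2 hy
  simp only [inner_sub_left, inner_sub_right, real_inner_smul_left, real_inner_smul_right, norm_smul, Real.norm_eq_abs, mul_pow, sq_abs, real_inner_self_eq_norm_sq] at h2
  have : 0 < ‖z‖ ^ 2 * (‖y‖ ^ 2 * ‖z‖ ^ 2 - ⟪y, z⟫ ^ 2) := by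
    rw [real_inner_comm y z] at h2
    nlinarith
  exact (pos_iff_pos_of_mul_pos this).1 (pow_pos hzz 2)

/-- a planar unit vector normal to `z` on the side opposite to `y`. -/
def PN {n : ℕ} (y z v : Euc n) : Prop :=
  v ∈ Submodule.span ℝ {y, z} ∧ ‖v‖ = 1 ∧ ⟪v, z⟫ = 0 ∧ ⟪v, y⟫ < 0

theorem PN_exists {n : ℕ} {y z : Euc n} (h : LinearIndependent ℝ ![y, z]) : ∃ v, PN y z v := by
  have hz : z ≠ 0 := by simpa using h.ne_zero 1
  have hzz : 0 < ‖z‖ := norm_pos_iff.2 hz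
  have hg := gram_pos h
  set w := ⟪y, z⟫ • z - ‖z‖ ^ 2 • y with hw
  have hwz : ⟪w, z⟫ = 0 := by
    simp [hw, inner_sub_left, real_inner_smul_left]; ring
  have hwy : ⟪w, y⟫ < 0 := by
    simp only [hw, inner_sub_left, real_inner_smul_left, real_inner_self_eq_norm_sq, real_inner_comm y z]
    nlinarith
  have hw0 : w ≠ 0 := by intro h; rw [h] at hwy; simp at hwy
  have hwn : 0 < ‖w‖ := norm_pos_iff.2 hw0
  refine ⟨‖w‖⁻¹ • w, ?_, ?_, ?_, ?_⟩
  · refine Submodule.smul_mem _ _ (Submodule.mem_span_pair.2 ⟨-‖z‖ ^ 2, ⟪y, z⟫, ?_⟩)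
    rw [hw]; module
  · rw [norm_smul, norm_inv, norm_norm, inv_mul_cancel₀ hwn.ne']
  · rw [real_inner_smul_left, hwz, mul_zero]
  · rw [real_inner_smul_left]
    exact mul_neg_of_pos_of_neg (inv_pos.2 hwn) hwy

theorem PN_inner {n : ℕ} {y z v : Euc n} (h : LinearIndependent ℝ ![y, z]) (hv : PN y z v) :
    ⟪v, y⟫ = - (√(‖y‖ ^ 2 * ‖z‖ ^ 2 - ⟪y, z⟫ ^ 2) * ‖z‖⁻¹) := by
  have hz : z ≠ 0 := by simpa using h.ne_zero 1
  have hzz : 0 < ‖z‖ := norm_pos_iff.2 hz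
  have hg := gram_pos h
  obtain ⟨h1, h2, h3, h4⟩ := hv
  obtain ⟨s, t, hst⟩ := Submodule.mem_span_pair.1 h1
  have e1 : s * ⟪y, z⟫ + t * ‖z‖ ^ 2 = 0 := by
    rw [← h3, ← hst]; simp [inner_add_left, real_inner_smul_left]
  have e2 : s * ⟪v, y⟫ = 1 := by
    have : ⟪v, v⟫ = 1 := by rw [real_inner_self_eq_norm_sq, h2]; norm_num
    rw [← this]
    conv_rhs => rw [← hst, inner_add_left, real_inner_smul_left, real_inner_smul_left, hst, real_inner_comm v z, h3, real_inner_comm v y]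
    ring
  have e3 : ⟪v, y⟫ = s * ‖y‖ ^ 2 + t * ⟪y, z⟫ := by
    rw [← hst]; simp [inner_add_left, real_inner_smul_left, real_inner_comm y z]
  have e4 : (⟪v, y⟫ * ‖z‖) ^ 2 = ‖y‖ ^ 2 * ‖z‖ ^ 2 - ⟪y, z⟫ ^ 2 := by
    have : ⟪v, y⟫ * ‖z‖ ^ 2 = s * (‖y‖ ^ 2 * ‖z‖ ^ 2 - ⟪y, z⟫ ^ 2) := by
      rw [e3]; linear_combination ⟪y, z⟫ * e1
    linear_combination ⟪v, y⟫ * this + (‖y‖ ^ 2 * ‖z‖ ^ 2 - ⟪y, z⟫ ^ 2) * e2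
  rw [← e4, Real.sqrt_sq_eq_abs, abs_of_neg (mul_neg_of_neg_of_pos h4 hzz)]
  field_simp

theorem range_face0 {n : ℕ} (p y z : Euc n) : Set.range (face ![p, y, z] 0) = {y, z} := by
  ext x; simp [face, Fin.exists_fin_succ, eq_comm]
theorem range_face1 {n : ℕ} (p y z : Euc n) : Set.range (face ![p, y, z] 1) = {p, z} := by
  ext x; simp [face, Fin.exists_fin_succ, eq_comm]
theorem range_face2 {n : ℕ} (p y z : Euc n) : Set.range (face ![p, y, z] 2) = {p, y} := by
  ext x; simp [face, Fin.exists_fin_succ, eq_comm]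

theorem bary_face {n : ℕ} (b : Fin 3 → Euc n) (i : Fin 3) :
    bary (face b i) = (2 : ℝ)⁻¹ • (∑ j, b j - b i) := by
  have h : ∑ j : {j : Fin 3 // j ≠ i}, face b i j = ∑ j, b j - b i := by
    rw [eq_sub_iff_add_eq, add_comm]
    exact (Fintype.sum_eq_add_sum_subtype_ne b i).symm
  have hc : Fintype.card {j : Fin 3 // j ≠ i} = 2 := by simp
  rw [bary, h, hc]; norm_num

theorem conormal_spec {n : ℕ} {b : Fin 3 → Euc n} {i : Fin 3} (h : ∃ v, IsConormal b i v) :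
    IsConormal b i (conormal b i) := by
  rw [conormal, dif_pos h]; exact h.choose_spec

theorem isConormal1 {n : ℕ} (y z v : Euc n) : IsConormal ![0, y, z] 1 v ↔ PN y z v := by
  have hs : vectorSpan ℝ ({0, z} : Set (Euc n)) = Submodule.span ℝ {z} := by
    rw [vectorSpan_pair_rev]; simp
  rw [IsConormal, PN, span_simp, range_face1, hs, bary_face]
  have : (∀ w ∈ Submodule.span ℝ {z}, ⟪v, w⟫ = 0) ↔ ⟪v, z⟫ = 0 := by
    constructor
    · intro h; exact h z (Submodule.mem_span_singleton_self z)
    · intro h w hw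
      obtain ⟨c, rfl⟩ := Submodule.mem_span_singleton.1 hw
      rw [real_inner_smul_right, h, mul_zero]
  rw [this]
  refine and_congr_right fun _ => and_congr_right fun _ => and_congr_right fun h => ?_
  simp [Fin.sum_univ_three, inner_sub_right, inner_smul_right, h]

theorem isConormal2 {n : ℕ} (y z v : Euc n) : IsConormal ![0, y, z] 2 v ↔ PN z y v := by
  have hs : vectorSpan ℝ ({0, y} : Set (Euc n)) = Submodule.span ℝ {y} := by
    rw [vectorSpan_pair_rev]; simp
  rw [IsConormal, PN, span_simp, range_face2, hs, bary_face, Set.pair_comm y z]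
  have : (∀ w ∈ Submodule.span ℝ {y}, ⟪v, w⟫ = 0) ↔ ⟪v, y⟫ = 0 := by
    constructor
    · intro h; exact h y (Submodule.mem_span_singleton_self y)
    · intro h w hw
      obtain ⟨c, rfl⟩ := Submodule.mem_span_singleton.1 hw
      rw [real_inner_smul_right, h, mul_zero]
  rw [this]
  refine and_congr_right fun _ => and_congr_right fun _ => and_congr_right fun h => ?_
  simp [Fin.sum_univ_three, inner_sub_right, inner_smul_right, h]

theorem conormal0_perp {n : ℕ} (y z : Euc n) : ⟪z - y, conormal ![0, y, z] 0⟫ = 0 := by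
  by_cases h : ∃ v, IsConormal ![0, y, z] 0 v
  · rw [real_inner_comm]
    refine (conormal_spec h).2.2.1 _ ?_
    rw [range_face0]
    exact vsub_mem_vectorSpan ℝ (by simp) (by simp)
  · rw [conormal, dif_neg h, inner_zero_right]

/-- the normalized length measure of the segment `[0, y]`. -/
def nu {n : ℕ} (y : Euc n) (S : Set (Euc n)) : ℝ :=
  (μH[1] (S ∩ segment ℝ 0 y)).toReal * ‖y‖⁻¹

theorem beam_mem {n : ℕ} {y z : Euc n} (h : LinearIndependent ℝ ![y, z]) :
    (fun S => (nu z S - nu y S) • (z - y)) ∈ beamSub n := by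
  have h' : LinearIndependent ℝ ![z, y] := LinearIndependent.pair_symm_iff.1 h
  have hg := gram_pos h
  set D := √(‖y‖ ^ 2 * ‖z‖ ^ 2 - ⟪y, z⟫ ^ 2) with hD
  have hDpos : 0 < D := Real.sqrt_pos.2 hg
  have c1 := (isConormal1 y z _).1 (conormal_spec ((PN_exists h).imp fun v hv => (isConormal1 y z v).2 hv))
  have c2 := (isConormal2 y z _).1 (conormal_spec ((PN_exists h').imp fun v hv => (isConormal2 y z v).2 hv))
  have i1 := PN_inner h c1
  have i2 := PN_inner h' c2
  rw [mul_comm (‖z‖ ^ 2)] at i2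
  rw [← hD] at i1
  have hD2 : √(‖y‖ ^ 2 * ‖z‖ ^ 2 - ⟪z, y⟫ ^ 2) = D := by rw [hD, real_inner_comm]
  refine ⟨1, fun _ => ![0, y, z], fun _ => D⁻¹ • rankOne (z - y), fun _ => ?_, fun _ => ?_, fun _ v => ?_, ?_⟩
  · rw [affineIndependent_iff_linearIndependent_vsub ℝ _ (0 : Fin 3)]
    have := h.comp (fun i : {x : Fin 3 // x ≠ 0} => i.1.pred i.2) (by
      intro i j hij; exact Subtype.ext (Fin.pred_inj.1 hij))
    convert this using 1
    funext ⟨i, hi⟩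
    fin_cases i <;> simp at hi ⊢
    rfl
  · ext p q; simp [rankOne, mul_comm]
  · rw [matVec_rankOne, span_simp]
    refine Submodule.smul_mem _ _ (Submodule.sub_mem _ ?_ ?_) <;>
      exact Submodule.subset_span (by simp)
  · funext S
    have hd : ((3 : ℕ) : ℝ) - 2 = 1 := by norm_num
    simp only [Fin.sum_univ_one, beam, Fin.sum_univ_three, matVec_rankOne, hd, simplexSet,
      range_face1, range_face2, convexHull_pair, conormal0_perp, nu]
    have j1 : ⟪z - y, conormal ![0, y, z] 1⟫ = D * ‖z‖⁻¹ := by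
      rw [real_inner_comm, inner_sub_right, c1.2.2.1, i1]; ring
    have j2 : ⟪z - y, conormal ![0, y, z] 2⟫ = - (D * ‖y‖⁻¹) := by
      rw [real_inner_comm, inner_sub_right, c2.2.2.1, i2]
      rw [hD2]; ring
    rw [j1, j2]
    have k1 : D⁻¹ * (D * ‖z‖⁻¹) = ‖z‖⁻¹ := by field_simp
    have k2 : D⁻¹ * -(D * ‖y‖⁻¹) = -‖y‖⁻¹ := by field_simp
    rw [k1, k2]
    module

theorem abs_key {n l : ℕ} (hn : 2 ≤ n) {Q : Type*} [AddCommGroup Q] [Module ℝ Q]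
    (ψ : Euc n → Euc n →ₗ[ℝ] Q)
    (hψ : ∀ y z : Euc n, LinearIndependent ℝ ![y, z] → ψ z (z - y) = ψ y (z - y))
    (a F : Fin l → Euc n) (ha : ∀ i, a i ≠ 0) (h0 : ∑ i, F i = 0)
    (h1 : ∀ p q, ∑ i, (a i p * F i q - F i p * a i q) = 0) :
    ∑ i, ψ (a i) (F i) = 0 := by
  classical
  let o : Fin n := ⟨0, by omega⟩
  let o' : Fin n := ⟨1, by omega⟩
  have hoo : o' ≠ o := by simp [o, o']
  let e : Fin n → Euc n := fun j => EuclideanSpace.single j 1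
  have he : ∀ j k, e j k = if k = j then 1 else 0 := by
    intro j k; simp [e]
  let ζ : ℝ → Euc n := fun t => WithLp.toLp 2 (fun k => if k = o then t else 1)
  have hζ : ∀ t k, ζ t k = if k = o then t else 1 := by intro t k; simp [ζ]
  -- linear independence from nonvanishing
  have hli : ∀ y z : Euc n, y ≠ 0 → (∀ s : ℝ, z ≠ s • y) → LinearIndependent ℝ ![y, z] := by
    intro y z hy hz
    rw [LinearIndependent.pair_iff' hy]
    intro s h; exact hz s h.symm
  -- bad parameters
  have hbad : ∀ v : Euc n, v o' + 1 ≠ 0 → ∀ i, {t : ℝ | ∃ s : ℝ, ζ t + v = s • a i}.Finite := by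
    intro v hv i
    apply Set.Subsingleton.finite
    rintro t ⟨s, hs⟩ t' ⟨s', hs'⟩
    have e1 := congrArg (fun x : Euc n => x o') hs
    have e1' := congrArg (fun x : Euc n => x o') hs'
    have e2 := congrArg (fun x : Euc n => x o) hs
    have e2' := congrArg (fun x : Euc n => x o) hs'
    simp [hζ, hoo] at e1 e1' e2 e2'
    have hne : a i o' ≠ 0 := by
      intro h; rw [h] at e1; apply hv; linarith
    have : s = s' := mul_right_cancel₀ hne (by linarith)
    subst this; linarith
  have hfin : ((⋃ i, {t : ℝ | ∃ s : ℝ, ζ t + 0 = s • a i}) ∪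
      ⋃ i, ⋃ j, {t : ℝ | ∃ s : ℝ, ζ t + e j = s • a i}).Finite := by
    refine Set.Finite.union (Set.finite_iUnion fun i => hbad 0 (by simp) i)
      (Set.finite_iUnion fun i => Set.finite_iUnion fun j => hbad (e j) ?_ i)
    rw [he]; split_ifs <;> norm_num
  obtain ⟨t, ht0, ht⟩ := (Set.Ioi_infinite (0 : ℝ)).exists_notMem_finite hfin
  replace ht0 : 0 < t := ht0
  simp only [Set.mem_union, Set.mem_iUnion, Set.mem_ofPred_eq, not_or, not_exists, add_zero] at ht
  obtain ⟨ht1, ht2⟩ := ht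
  set z := ζ t with hz
  have hzpos : ∀ k, 0 < z k := by
    intro k; rw [hζ]; split_ifs <;> [exact ht0; exact one_pos]
  have hother : ∀ j : Fin n, ∃ k, k ≠ j := by
    intro j; by_cases h : j = o
    · exact ⟨o', h ▸ hoo⟩
    · exact ⟨o, fun h' => h h'.symm⟩
  have hz0 : z ≠ 0 := by
    intro h; have := hzpos o; rw [h] at this; simp at this
  -- relations
  have r1 : ∀ j, ψ (z + e j) (e j) = ψ z (e j) := by
    intro j
    have := hψ z (z + e j) (hli _ _ hz0 ?_)
    · simpa using this
    · intro s hs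
      obtain ⟨k, hk⟩ := hother j
      have e1 := congrArg (fun x : Euc n => x k) hs
      have e2 := congrArg (fun x : Euc n => x j) hs
      simp [he, hk] at e1 e2
      have : s = 1 := by
        have := hzpos k
        have h3 : (s - 1) * z k = 0 := by linarith
        rcases mul_eq_zero.1 h3 with h | h <;> linarith
      subst this; linarith
  have hw0 : ∀ j, z + e j ≠ 0 := by
    intro j h
    have e1 := congrArg (fun x : Euc n => x j) h
    simp [he] at e1
    have := hzpos j; linarith
  have r2 : ∀ j k, ψ (z + e k) (e k - e j) = ψ (z + e j) (e k - e j) := by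
    intro j k
    by_cases hjk : k = j
    · subst hjk; rfl
    have := hψ (z + e j) (z + e k) (hli _ _ (hw0 j) ?_)
    · simpa using this
    · intro s hs
      have e1 := congrArg (fun x : Euc n => x j) hs
      have e2 := congrArg (fun x : Euc n => x k) hs
      have hjk' : j ≠ k := fun h => hjk h.symm
      simp [he, hjk, hjk'] at e1 e2
      have p1 := hzpos j
      have p2 := hzpos k
      nlinarith
  have r3 : ∀ i, ψ (a i) (a i - z) = ψ z (a i - z) := by
    intro i
    have := hψ (a i) z (hli _ _ (ha i) (fun s hs => ht1 i s hs))
    have h2 := congrArg Neg.neg this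
    simpa only [← map_neg, neg_sub] using h2.symm
  have r4 : ∀ i j, ψ (a i) (a i - (z + e j)) = ψ (z + e j) (a i - (z + e j)) := by
    intro i j
    have := hψ (a i) (z + e j) (hli _ _ (ha i) (fun s hs => ht2 i j s hs))
    have h2 := congrArg Neg.neg this
    simpa only [← map_neg, neg_sub] using h2.symm
  let B : Fin n → Euc n →ₗ[ℝ] Q := fun j => ψ (z + e j) - ψ z
  have hB0 : ∀ j, B j (e j) = 0 := by intro j; simp [B, r1]
  have hBs : ∀ j k, B j (e k) = - B k (e j) := by
    intro j k
    have := r2 j k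
    simp only [map_sub, r1] at this
    simp only [B, LinearMap.sub_apply]
    rw [← sub_eq_zero] at this ⊢
    rw [← neg_eq_zero, ← this]; abel
  have hsum : ∀ x : Euc n, x = ∑ k, x k • e k := by
    intro x; ext k; simp [he]
  have hA : ∀ i j, ψ (a i) (e j) = ψ z (e j) - B j (a i - z) := by
    intro i j
    have h3 := r3 i
    have h4 := r4 i j
    have h5 := r1 j
    simp only [map_sub, map_add, B, LinearMap.sub_apply] at h3 h4 h5 ⊢
    rw [← sub_eq_zero] at h3 h4 h5 ⊢
    have h6 := congrArg₂ (· + ·) (congrArg₂ (· - ·) h3 h4) h5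
    simp only [sub_zero, add_zero] at h6
    rw [← h6]; abel
  have hf : ∀ i, ψ (a i) (F i) = ψ z (F i) + ∑ j, F i j • B j z - ∑ j, ∑ k, (F i j * a i k) • B j (e k) := by
    intro i
    have : ∀ (f : Euc n →ₗ[ℝ] Q) x, f x = ∑ k, x k • f (e k) := by
      intro f x; conv_lhs => rw [hsum x]
      simp
    rw [this (ψ (a i)), this (ψ z) (F i)]
    rw [← Finset.sum_add_distrib, ← Finset.sum_sub_distrib]
    refine Finset.sum_congr rfl fun j _ => ?_
    rw [hA, map_sub, this (B j) (a i)]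
    simp only [mul_smul, ← Finset.smul_sum]
    module
  simp only [hf, Finset.sum_sub_distrib, Finset.sum_add_distrib]
  have t1 : ∑ i, ψ z (F i) = 0 := by rw [← map_sum, h0, map_zero]
  have t2 : ∑ i, ∑ j, F i j • B j z = 0 := by
    rw [Finset.sum_comm]
    refine Finset.sum_eq_zero fun j _ => ?_
    rw [← Finset.sum_smul]
    have := congrArg (fun x : Euc n => x j) h0
    simp at this
    rw [this, zero_smul]
  have t3 : ∑ i, ∑ j, ∑ k, (F i j * a i k) • B j (e k) = 0 := by
    have q1 : ∑ i, ∑ j, ∑ k, (F i j * a i k) • B j (e k) =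
        ∑ j, ∑ k, (∑ i, F i j * a i k) • B j (e k) := by
      rw [Finset.sum_comm]
      refine Finset.sum_congr rfl fun j _ => ?_
      rw [Finset.sum_comm]
      refine Finset.sum_congr rfl fun k _ => ?_
      rw [Finset.sum_smul]
    rw [q1]
    set X := ∑ j, ∑ k, (∑ i, F i j * a i k) • B j (e k) with hX
    have q2 : X = -X := by
      conv_lhs => rw [hX, Finset.sum_comm]
      rw [hX, ← Finset.sum_neg_distrib]
      refine Finset.sum_congr rfl fun j _ => ?_
      rw [← Finset.sum_neg_distrib]
      refine Finset.sum_congr rfl fun k _ => ?_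
      rw [hBs k j, smul_neg]
      congr 2
      have := h1 j k
      rw [Finset.sum_sub_distrib, sub_eq_zero] at this
      rw [← this]
      exact Finset.sum_congr rfl fun i _ => mul_comm _ _
    have q3 : (2 : ℝ) • X = 0 := by
      rw [two_smul]; nth_rewrite 1 [q2]; simp
    exact (smul_eq_zero.1 q3).resolve_left two_ne_zero
  rw [t1, t2, t3]; simp
/-- The radial case for `k = 2`: an equilibrium system of forces on
segments `[O, aᵢ]` emanating from the origin is a finite sum of `2`-beams. -/
theorem statement3 {n l : ℕ} (hn : 2 ≤ n)
    (a : Fin l → Euc n) (ha : ∀ i, a i ≠ 0)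
    (F : Fin l → Euc n)
    (hequil : equil 1 (fun i => ![(0 : Euc n), a i]) F) :
    IsBeamSum 3 (sys 1 (fun i => ![(0 : Euc n), a i]) F) := by
  have hseg : ∀ y : Euc n, simplexSet ![0, y] = segment ℝ 0 y := by
    intro y; rw [simplexSet, ← convexHull_pair]; congr 1; ext x; simp [eq_comm, or_comm]
  have hlen : ∀ y : Euc n, (μH[1] (segment ℝ 0 y)).toReal = ‖y‖ := by
    intro y; rw [hausdorffMeasure_segment, edist_dist, ENNReal.toReal_ofReal dist_nonneg, dist_zero_left]
  obtain ⟨e0, e1⟩ := hequil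
  simp only [hseg, hlen] at e0 e1
  let L : Euc n → Euc n →ₗ[ℝ] (Set (Euc n) → Euc n) := fun y =>
    LinearMap.pi fun S => nu y S • LinearMap.id
  have key := abs_key hn (fun y => (beamSub n).mkQ ∘ₗ L y) ?_ a (fun i => ‖a i‖ • F i) ha e0 ?_
  · simp only [LinearMap.comp_apply, ← map_sum] at key
    rw [Submodule.mkQ_apply, Submodule.Quotient.mk_eq_zero] at key
    have : sys 1 (fun i => ![(0 : Euc n), a i]) F = ∑ i, L (a i) (‖a i‖ • F i) := by
      funext S
      simp only [sys, hseg, Finset.sum_apply]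
      refine Finset.sum_congr rfl fun i _ => ?_
      have := norm_ne_zero_iff.2 (ha i)
      simp only [L, LinearMap.pi_apply, LinearMap.smul_apply, LinearMap.id_apply, nu, smul_smul]
      rw [mul_assoc, inv_mul_cancel₀ this, mul_one]
    rw [this]; exact key
  · intro y z h
    rw [← sub_eq_zero]
    simp only [LinearMap.comp_apply, ← map_sub]
    rw [Submodule.mkQ_apply, Submodule.Quotient.mk_eq_zero]
    convert beam_mem h using 1
    funext S
    simp [L, sub_smul, smul_sub]
    abel
  · intro p q
    have := congrFun (congrFun e1 p) q
    simp only [Matrix.sum_apply, Matrix.smul_apply, wedge, bary, Matrix.of_apply] at this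
    simp at this
    have h2 := congrArg (fun x : ℝ => 2 * x) this
    simp only [Finset.mul_sum, mul_zero] at h2
    rw [← h2]
    refine Finset.sum_congr rfl fun i _ => ?_
    simp
    ring
end
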